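/- Proposition 5 (small cases): Let ψ be a pure n-qubit state satisfying the preferred-basis condition. If n = 3 and M(ρ_ψ) > 2, then ψ is genuinely 3-partite entangled; if n = 4 and M(ρ_ψ) > 4, then ψ is genuinely 4-partite entangled. (Genuinely n-partite entangled means: ψ is not a product of two pure states over any bipartition of the n qubits into two nonempty sets.) -/

import Mathlib

noncomputable def pauli : ℕ → Matrix (Fin 2) (Fin 2) ℂ
  | 1 => !![0, 1; 1, 0]
  | 2 => !![0, -Complex.I; Complex.I, 0]
  | 3 => !![1, 0; 0, -1]
  | _ => 1

/-- The `ι`-fold Kronecker product of single-qubit operators `pauli (f k)`. -/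
noncomputable def kronOp {ι : Type*} [Fintype ι] [DecidableEq ι] (f : ι → ℕ) :
    Matrix (ι → Fin 2) (ι → Fin 2) ℂ :=
  Matrix.of fun x y => ∏ k, pauli (f k) (x k) (y k)

/-- Two-body correlation `T^{kl}_{ij}(ρ)`. -/
noncomputable def corr {ι : Type*} [Fintype ι] [DecidableEq ι]
    (ρ : Matrix (ι → Fin 2) (ι → Fin 2) ℂ) (k l : ι) (i j : ℕ) : ℝ :=
  ((ρ * kronOp (fun q => if q = k then i else if q = l then j else 0)).trace).re

/-- Single-qubit Bloch vector component `b^{(q)}_i(ρ)`. -/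
noncomputable def bloch {ι : Type*} [Fintype ι] [DecidableEq ι]
    (ρ : Matrix (ι → Fin 2) (ι → Fin 2) ℂ) (q : ι) (i : ℕ) : ℝ :=
  ((ρ * kronOp (fun p => if p = q then i else 0)).trace).re

/-- `M_{kl}(ρ)`. -/
noncomputable def Mkl {ι : Type*} [Fintype ι] [DecidableEq ι]
    (ρ : Matrix (ι → Fin 2) (ι → Fin 2) ℂ) (k l : ι) : ℝ :=
  ∑ i ∈ Finset.Icc 1 2, ∑ j ∈ Finset.Icc 1 2, (corr ρ k l i j) ^ 2

/-- `M(ρ) = Σ_{k<l} M_{kl}(ρ)`. -/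
noncomputable def Mtot {ι : Type*} [Fintype ι] [LinearOrder ι]
    (ρ : Matrix (ι → Fin 2) (ι → Fin 2) ℂ) : ℝ :=
  ∑ p ∈ Finset.univ.filter (fun p : ι × ι => p.1 < p.2), Mkl ρ p.1 p.2

/-- Density matrix of a pure state `ψ`: `ρ_ψ = ψ ψ†`. -/
noncomputable def pureDensity {ι : Type*} [Fintype ι] [DecidableEq ι]
    (ψ : (ι → Fin 2) → ℂ) : Matrix (ι → Fin 2) (ι → Fin 2) ℂ :=
  Matrix.of fun x y => ψ x * (starRingEnd ℂ) (ψ y)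

/-- `ψ` is a unit vector. -/
def UnitVec {ι : Type*} [Fintype ι] [DecidableEq ι] (ψ : (ι → Fin 2) → ℂ) : Prop :=
  ∑ x, Complex.normSq (ψ x) = 1

/-- Preferred-basis condition: all transverse Bloch components vanish. -/
def PreferredBasis {ι : Type*} [Fintype ι] [DecidableEq ι]
    (ρ : Matrix (ι → Fin 2) (ι → Fin 2) ℂ) : Prop :=
  ∀ q : ι, bloch ρ q 1 = 0 ∧ bloch ρ q 2 = 0

/-- `P` is a partition of `Fin n` into `k` nonempty blocks. -/
def IsPartition {n k : ℕ} (P : Fin k → Finset (Fin n)) : Prop :=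
  (∀ m, (P m).Nonempty) ∧ (∀ m m', m ≠ m' → Disjoint (P m) (P m')) ∧
    ∀ q : Fin n, ∃ m, q ∈ P m

/-- Restriction of an `n`-bit string to a block of qubits. -/
def restrictB {n : ℕ} (S : Finset (Fin n)) (f : Fin n → Fin 2) : (↥S → Fin 2) :=
  fun q => f q.val

/-- `ψ` is the tensor product, under the canonical qubit-reordering isomorphism,
of pure states on the blocks of `P`. -/
def IsProductOver {n k : ℕ} (ψ : (Fin n → Fin 2) → ℂ) (P : Fin k → Finset (Fin n)) : Prop :=
  ∃ φ : (m : Fin k) → ((↥(P m) → Fin 2) → ℂ),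
    (∀ m, UnitVec (φ m)) ∧ ∀ f : Fin n → Fin 2, ψ f = ∏ m, φ m (restrictB (P m) f)


open Matrix in
/-- Kronecker product of a family of single-qubit matrices. -/
noncomputable def kronFam {ι : Type*} [Fintype ι] [DecidableEq ι]
    (F : ι → Matrix (Fin 2) (Fin 2) ℂ) : Matrix (ι → Fin 2) (ι → Fin 2) ℂ :=
  Matrix.of fun x y => ∏ k, F k (x k) (y k)

lemma kronFam_mul {ι : Type*} [Fintype ι] [DecidableEq ι]
    (F G : ι → Matrix (Fin 2) (Fin 2) ℂ) :
    kronFam F * kronFam G = kronFam (fun k => F k * G k) := by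
  ext x y
  simp only [kronFam, Matrix.mul_apply, Matrix.of_apply]
  rw [Finset.prod_univ_sum, Fintype.piFinset_univ]
  refine Finset.sum_congr rfl fun z _ => ?_
  rw [Finset.prod_mul_distrib]

lemma kronFam_one {ι : Type*} [Fintype ι] [DecidableEq ι] :
    kronFam (fun _ : ι => (1 : Matrix (Fin 2) (Fin 2) ℂ)) = 1 := by
  ext x y
  simp only [kronFam, Matrix.of_apply, Matrix.one_apply]
  by_cases h : x = y
  · subst h; simp
  · rw [if_neg h]
    obtain ⟨k, hk⟩ := Function.ne_iff.mp h
    exact Finset.prod_eq_zero (Finset.mem_univ k) (if_neg hk)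

lemma kronFam_neg {ι : Type*} [Fintype ι] [DecidableEq ι]
    (F G : ι → Matrix (Fin 2) (Fin 2) ℂ) (k : ι) (hk : F k = - G k)
    (h : ∀ q, q ≠ k → F q = G q) : kronFam F = - kronFam G := by
  ext x y
  simp only [kronFam, Matrix.of_apply, Matrix.neg_apply]
  rw [← Finset.mul_prod_erase _ _ (Finset.mem_univ k),
    ← Finset.mul_prod_erase _ _ (Finset.mem_univ k), hk, Matrix.neg_apply, neg_mul]
  congr 2
  refine Finset.prod_congr rfl fun q hq => ?_
  rw [h q (Finset.ne_of_mem_erase hq)]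

lemma kronOp_eq {ι : Type*} [Fintype ι] [DecidableEq ι] (f : ι → ℕ) :
    kronOp f = kronFam (fun k => pauli (f k)) := rfl

lemma pauli_sq (a : ℕ) : pauli a * pauli a = 1 := by
  unfold pauli
  split <;> ext i j <;> fin_cases i <;> fin_cases j <;> simp [Matrix.mul_apply]

lemma pauli_herm (a : ℕ) (i j : Fin 2) : (starRingEnd ℂ) (pauli a i j) = pauli a j i := by
  unfold pauli
  split <;> fin_cases i <;> fin_cases j <;> simp

lemma pauli_anti : pauli 1 * pauli 2 = - (pauli 2 * pauli 1) := by
  unfold pauli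
  ext i j <;> fin_cases i <;> fin_cases j <;> simp [Matrix.mul_apply]

lemma pauli_anti' : pauli 2 * pauli 1 = - (pauli 1 * pauli 2) := by
  rw [pauli_anti, neg_neg]

lemma pauli_zero : pauli 0 = 1 := rfl

lemma kronOp_sq {ι : Type*} [Fintype ι] [DecidableEq ι] (f : ι → ℕ) :
    kronOp f * kronOp f = 1 := by
  rw [kronOp_eq, kronFam_mul]
  simp only [pauli_sq]
  exact kronFam_one

lemma kronOp_herm {ι : Type*} [Fintype ι] [DecidableEq ι] (f : ι → ℕ) :
    (kronOp f).conjTranspose = kronOp f := by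
  ext x y
  simp only [kronOp, Matrix.conjTranspose_apply, Matrix.of_apply, ← starRingEnd_apply, map_prod,
    pauli_herm]

lemma kronOp_anti {ι : Type*} [Fintype ι] [DecidableEq ι] (f g : ι → ℕ) (k : ι)
    (hk : pauli (g k) * pauli (f k) = - (pauli (f k) * pauli (g k)))
    (h : ∀ q, q ≠ k → f q = g q ∨ f q = 0 ∨ g q = 0) :
    kronOp g * kronOp f = - (kronOp f * kronOp g) := by
  simp only [kronOp_eq, kronFam_mul]
  refine kronFam_neg _ _ k hk fun q hq => ?_
  rcases h q hq with h | h | h <;> simp [h, pauli_zero]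

/-- Expectation value, real part. -/
noncomputable def expv {ι : Type*} [Fintype ι] [DecidableEq ι] (ψ : (ι → Fin 2) → ℂ)
    (A : Matrix (ι → Fin 2) (ι → Fin 2) ℂ) : ℝ := ((pureDensity ψ * A).trace).re

section expv
variable {ι : Type*} [Fintype ι] [DecidableEq ι] (ψ : (ι → Fin 2) → ℂ)

lemma expv_add (A B : Matrix (ι → Fin 2) (ι → Fin 2) ℂ) :
    expv ψ (A + B) = expv ψ A + expv ψ B := by
  simp [expv, Matrix.mul_add]

lemma expv_smul (r : ℝ) (A : Matrix (ι → Fin 2) (ι → Fin 2) ℂ) :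
    expv ψ (r • A) = r * expv ψ A := by
  simp [expv]

lemma trace_one (h : UnitVec ψ) : (pureDensity ψ * 1).trace = 1 := by
  unfold UnitVec at h
  simp only [mul_one, Matrix.trace, pureDensity, Matrix.diag_apply, Matrix.of_apply,
    Complex.mul_conj]
  exact_mod_cast h

lemma expv_one (h : UnitVec ψ) : expv ψ 1 = 1 := by
  simp only [expv, trace_one ψ h, Complex.one_re]

lemma pureDensity_eq : pureDensity ψ = Matrix.vecMulVec ψ (star ψ) := by
  ext x y; simp [pureDensity, Matrix.vecMulVec_apply]

lemma expv_nonneg (A : Matrix (ι → Fin 2) (ι → Fin 2) ℂ) (hA : A.conjTranspose = A) :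
    0 ≤ expv ψ (A * A) := by
  have h : (pureDensity ψ * (A * A)).trace = star (A.mulVec ψ) ⬝ᵥ (A.mulVec ψ) := by
    rw [pureDensity_eq, Matrix.trace_mul_comm, Matrix.mul_vecMulVec, Matrix.trace_vecMulVec,
      ← Matrix.mulVec_mulVec, Matrix.star_mulVec, hA, dotProduct_comm, Matrix.dotProduct_mulVec]
  unfold expv
  rw [h, dotProduct, Complex.re_sum]
  refine Finset.sum_nonneg fun x _ => ?_
  simp only [Pi.star_apply, RCLike.star_def, Complex.mul_re, Complex.conj_re, Complex.conj_im]
  nlinarith [sq_nonneg (A.mulVec ψ x).re, sq_nonneg (A.mulVec ψ x).im]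

lemma anti_bound (h : UnitVec ψ) (A B C D : Matrix (ι → Fin 2) (ι → Fin 2) ℂ)
    (hA : A.conjTranspose = A) (hB : B.conjTranspose = B)
    (hC : C.conjTranspose = C) (hD : D.conjTranspose = D)
    (sA : A * A = 1) (sB : B * B = 1) (sC : C * C = 1) (sD : D * D = 1)
    (hAB : B * A = - (A * B)) (hAC : C * A = - (A * C)) (hAD : D * A = - (A * D))
    (hBC : C * B = - (B * C)) (hBD : D * B = - (B * D)) (hCD : D * C = - (C * D)) :
    expv ψ A ^ 2 + expv ψ B ^ 2 + expv ψ C ^ 2 + expv ψ D ^ 2 ≤ 1 := by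
  set a := expv ψ A with ha
  set b := expv ψ B with hb
  set c := expv ψ C with hc
  set d := expv ψ D with hd
  set s := a ^ 2 + b ^ 2 + c ^ 2 + d ^ 2 with hs
  have key := expv_nonneg ψ (a • A + b • B + c • C + d • D + (-s) • 1) (by
    simp [Matrix.conjTranspose_add, Matrix.conjTranspose_smul, hA, hB, hC, hD])
  have e : (a • A + b • B + c • C + d • D + (-s) • 1) *
      (a • A + b • B + c • C + d • D + (-s) • (1 : Matrix (ι → Fin 2) (ι → Fin 2) ℂ))
      = (s + s ^ 2) • 1 + (-2 * s * a) • A + (-2 * s * b) • B + (-2 * s * c) • C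
        + (-2 * s * d) • D := by
    simp only [mul_add, add_mul, smul_mul_assoc, mul_smul_comm, sA, sB, sC, sD, hAB, hAC, hAD,
      hBC, hBD, hCD, mul_one, one_mul, smul_neg]
    rw [show s + s ^ 2 = a ^ 2 + b ^ 2 + c ^ 2 + d ^ 2 + s ^ 2 from rfl]
    module
  rw [e] at key
  simp only [expv_add, expv_smul, expv_one ψ h, ← ha, ← hb, ← hc, ← hd] at key
  have : 0 ≤ s - s ^ 2 := by
    have : s * s = s * (a ^ 2 + b ^ 2 + c ^ 2 + d ^ 2) := rfl
    nlinarith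
  nlinarith

lemma monogamy (h : UnitVec ψ) (k l m : ι) (hkl : k ≠ l) (hkm : k ≠ m) (hlm : l ≠ m) :
    Mkl (pureDensity ψ) k l + Mkl (pureDensity ψ) k m ≤ 2 := by
  have hlk := hkl.symm
  have hmk := hkm.symm
  have hml := hlm.symm
  have h4 : ∀ a b : ℕ, pauli b * pauli a = - (pauli a * pauli b) →
      corr (pureDensity ψ) k l a 1 ^ 2 + corr (pureDensity ψ) k l a 2 ^ 2
      + corr (pureDensity ψ) k m b 1 ^ 2 + corr (pureDensity ψ) k m b 2 ^ 2 ≤ 1 := by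
    intro a b hab
    have aux : ∀ i j : ℕ, 
      kronOp (fun q => if q = k then b else if q = m then j else 0) *
      kronOp (fun q => if q = k then a else if q = l then i else 0) =
      -(kronOp (fun q => if q = k then a else if q = l then i else 0) *
      kronOp (fun q => if q = k then b else if q = m then j else 0)) := by
      intro i j
      refine kronOp_anti _ _ k (by simpa using hab) fun q hq => ?_
      simp only [hq, if_false]
      by_cases h1 : q = l
      · subst h1; simp [hlm]
      · simp [h1]
    have aux2 : ∀ (t : ι) (a : ℕ), t ≠ k → 
      kronOp (fun q => if q = k then a else if q = t then 2 else 0) *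
      kronOp (fun q => if q = k then a else if q = t then 1 else 0) =
      -(kronOp (fun q => if q = k then a else if q = t then 1 else 0) *
      kronOp (fun q => if q = k then a else if q = t then 2 else 0)) := by
      intro t a ht
      refine kronOp_anti _ _ t (by simpa [ht] using pauli_anti') fun q hq => ?_
      simp [hq]
    exact anti_bound ψ h _ _ _ _ (kronOp_herm _) (kronOp_herm _) (kronOp_herm _) (kronOp_herm _)
      (kronOp_sq _) (kronOp_sq _) (kronOp_sq _) (kronOp_sq _)
      (aux2 l a hlk) (aux _ _) (aux _ _) (aux _ _) (aux _ _) (aux2 m b hmk)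
  have h1 := h4 1 2 pauli_anti'
  have h2 := h4 2 1 pauli_anti
  have hI : Finset.Icc 1 2 = ({1, 2} : Finset ℕ) := by decide
  simp only [Mkl, hI]
  simp only [Finset.sum_pair (show (1 : ℕ) ≠ 2 by decide)]
  linarith

end expv

lemma corr_symm {ι : Type*} [Fintype ι] [DecidableEq ι]
    (ρ : Matrix (ι → Fin 2) (ι → Fin 2) ℂ) (k l : ι) (hkl : k ≠ l) (i j : ℕ) :
    corr ρ k l i j = corr ρ l k j i := by
  unfold corr
  have : (fun q => if q = k then i else if q = l then j else 0)
      = (fun q => if q = l then j else if q = k then i else 0) := by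
    funext q
    by_cases h : q = k
    · subst h; simp [hkl]
    · simp [h]
  rw [this]

lemma Mkl_symm {ι : Type*} [Fintype ι] [DecidableEq ι]
    (ρ : Matrix (ι → Fin 2) (ι → Fin 2) ℂ) (k l : ι) (hkl : k ≠ l) :
    Mkl ρ k l = Mkl ρ l k := by
  unfold Mkl
  rw [Finset.sum_comm]
  simp only [corr_symm ρ k l hkl]

lemma Mkl_nonneg {ι : Type*} [Fintype ι] [DecidableEq ι]
    (ρ : Matrix (ι → Fin 2) (ι → Fin 2) ℂ) (k l : ι) : 0 ≤ Mkl ρ k l :=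
  Finset.sum_nonneg fun _ _ => Finset.sum_nonneg fun _ _ => sq_nonneg _

lemma trace_im {ι : Type*} [Fintype ι] [DecidableEq ι] (ψ : (ι → Fin 2) → ℂ) (f : ι → ℕ) :
    ((pureDensity ψ * kronOp f).trace).im = 0 := by
  have h : star ((pureDensity ψ * kronOp f).trace) = (pureDensity ψ * kronOp f).trace := by
    rw [← Matrix.trace_conjTranspose, Matrix.conjTranspose_mul, kronOp_herm,
      Matrix.trace_mul_comm]
    congr 2
    ext x y
    simp [pureDensity, mul_comm]
  exact Complex.conj_eq_iff_im.mp h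

lemma trace_zero_op {ι : Type*} [Fintype ι] [DecidableEq ι] (ψ : (ι → Fin 2) → ℂ)
    (h : UnitVec ψ) : (pureDensity ψ * kronOp (fun _ => 0)).trace = 1 := by
  rw [kronOp_eq]
  simp only [pauli_zero]
  rw [kronFam_one, trace_one ψ h]

lemma trace_expand {ι : Type*} [Fintype ι] [DecidableEq ι] (ψ : (ι → Fin 2) → ℂ) (f : ι → ℕ) :
    (pureDensity ψ * kronOp f).trace =
      ∑ x, ∑ y, ψ x * (starRingEnd ℂ) (ψ y) * ∏ k, pauli (f k) (y k) (x k) := by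
  simp [Matrix.trace, Matrix.mul_apply, pureDensity, kronOp]

section split
variable {n : ℕ} (S T : Finset (Fin n))

lemma prod_split (hd : Disjoint S T) (hu : ∀ q, q ∈ S ∨ q ∈ T)
    (g : Fin n → ℂ) : ∏ q, g q = (∏ q : S, g q) * ∏ q : T, g q := by
  have : (Finset.univ : Finset (Fin n)) = S ∪ T := by
    ext q; simpa using hu q
  rw [this, Finset.prod_union hd, ← Finset.prod_coe_sort S, ← Finset.prod_coe_sort T]

lemma restr_bij (hd : Disjoint S T) (hu : ∀ q, q ∈ S ∨ q ∈ T)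
    : Function.Bijective
    (fun x : Fin n → Fin 2 => (restrictB S x, restrictB T x)) := by
  constructor
  · intro x y hxy
    simp only [Prod.mk.injEq] at hxy
    funext q
    rcases hu q with hq | hq
    · exact congrFun hxy.1 ⟨q, hq⟩
    · exact congrFun hxy.2 ⟨q, hq⟩
  · rintro ⟨a, b⟩
    refine ⟨fun q => if hq : q ∈ S then a ⟨q, hq⟩ else
      if hq' : q ∈ T then b ⟨q, hq'⟩ else 0, ?_⟩
    refine Prod.ext ?_ ?_
    · funext q
      simp [restrictB]
    · funext q
      have : (q : Fin n) ∉ S := fun h => (Finset.disjoint_left.mp hd h) q.2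
      simp [restrictB, this]

lemma sum_split (hd : Disjoint S T) (hu : ∀ q, q ∈ S ∨ q ∈ T)
    (g : (S → Fin 2) → (T → Fin 2) → ℂ) :
    ∑ x : Fin n → Fin 2, g (restrictB S x) (restrictB T x) = ∑ a, ∑ b, g a b := by
  rw [← Fintype.sum_prod_type']
  exact Function.Bijective.sum_comp (restr_bij S T hd hu) (fun p => g p.1 p.2)

lemma trace_split (hd : Disjoint S T) (hu : ∀ q, q ∈ S ∨ q ∈ T)
    (ψ : (Fin n → Fin 2) → ℂ) (φ : (S → Fin 2) → ℂ) (χ : (T → Fin 2) → ℂ)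
    (hψ : ∀ x, ψ x = φ (restrictB S x) * χ (restrictB T x)) (f : Fin n → ℕ) :
    (pureDensity ψ * kronOp f).trace =
      (pureDensity φ * kronOp (fun q : S => f q)).trace *
      (pureDensity χ * kronOp (fun q : T => f q)).trace := by
  rw [trace_expand, trace_expand, trace_expand]
  set g : (S → Fin 2) → (S → Fin 2) → ℂ := fun x y =>
    φ x * (starRingEnd ℂ) (φ y) * ∏ k : S, pauli (f k) (y k) (x k) with hg
  set g' : (T → Fin 2) → (T → Fin 2) → ℂ := fun x y =>
    χ x * (starRingEnd ℂ) (χ y) * ∏ k : T, pauli (f k) (y k) (x k) with hg'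
  have e : ∀ x y, ψ x * (starRingEnd ℂ) (ψ y) * ∏ k, pauli (f k) (y k) (x k)
      = g (restrictB S x) (restrictB S y) * g' (restrictB T x) (restrictB T y) := by
    intro x y
    rw [prod_split S T hd hu, hψ, hψ, map_mul]
    simp only [hg, hg', restrictB]
    ring
  simp only [e]
  have e2 : ∀ x, ∑ y, g (restrictB S x) (restrictB S y) * g' (restrictB T x) (restrictB T y)
      = (∑ a, g (restrictB S x) a) * (∑ b, g' (restrictB T x) b) := by
    intro x
    rw [sum_split S T hd hu (fun a b => g (restrictB S x) a * g' (restrictB T x) b),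
      Finset.sum_mul_sum]
  simp only [e2]
  rw [sum_split S T hd hu (fun a b => (∑ a', g a a') * (∑ b', g' b b')), Finset.sum_mul_sum]

lemma cross_zero (hd : Disjoint S T) (hu : ∀ q, q ∈ S ∨ q ∈ T)
    (ψ : (Fin n → Fin 2) → ℂ) (φ : (S → Fin 2) → ℂ) (χ : (T → Fin 2) → ℂ)
    (hψ : ∀ x, ψ x = φ (restrictB S x) * χ (restrictB T x)) (hχ : UnitVec χ)
    (hp : PreferredBasis (pureDensity ψ)) (k l : Fin n) (hk : k ∈ S) (hl : l ∈ T) :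
    Mkl (pureDensity ψ) k l = 0 := by
  have hne : ∀ q : T, (q : Fin n) ≠ k := fun q h =>
    Finset.disjoint_left.mp hd hk (h ▸ q.2)
  have hne' : ∀ q : S, (q : Fin n) ≠ l := fun q h =>
    Finset.disjoint_left.mp hd (h ▸ q.2) hl
  have hb : ∀ i, bloch (pureDensity ψ) k i = 0 →
      (pureDensity φ * kronOp (fun q : S => if (q : Fin n) = k then i else 0)).trace = 0 := by
    intro i hi
    unfold bloch at hi
    rw [trace_split S T hd hu ψ φ χ hψ] at hi
    simp only [hne, if_false, trace_zero_op χ hχ, mul_one] at hi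
    exact Complex.ext hi (trace_im _ _)
  have hc : ∀ i j, bloch (pureDensity ψ) k i = 0 → corr (pureDensity ψ) k l i j = 0 := by
    intro i j hi
    unfold corr
    rw [trace_split S T hd hu ψ φ χ hψ]
    simp only [hne', if_false]
    rw [hb i hi, zero_mul, Complex.zero_re]
  unfold Mkl
  refine Finset.sum_eq_zero fun i hi => Finset.sum_eq_zero fun j _ => ?_
  have hi' : bloch (pureDensity ψ) k i = 0 := by
    rw [Finset.mem_Icc] at hi
    obtain rfl | rfl : i = 1 ∨ i = 2 := by omega
    · exact (hp k).1
    · exact (hp k).2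
  rw [hc i j hi']; simp

end split

lemma product_cross {n : ℕ} (ψ : (Fin n → Fin 2) → ℂ) (hp : PreferredBasis (pureDensity ψ))
    (P : Fin 2 → Finset (Fin n)) (hP : IsPartition P) (h : IsProductOver ψ P) (k l : Fin n)
    (hkl : ¬ (k ∈ P 0 ↔ l ∈ P 0)) : Mkl (pureDensity ψ) k l = 0 := by
  obtain ⟨φ, hφ, hprod⟩ := h
  have hd : Disjoint (P 0) (P 1) := hP.2.1 0 1 (by decide)
  have hu : ∀ q, q ∈ P 0 ∨ q ∈ P 1 := fun q => by
    obtain ⟨m, hm⟩ := hP.2.2 q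
    fin_cases m
    · exact Or.inl hm
    · exact Or.inr hm
  have hψ : ∀ x, ψ x = φ 0 (restrictB (P 0) x) * φ 1 (restrictB (P 1) x) := by
    intro x; rw [hprod, Fin.prod_univ_two]
  by_cases hk : k ∈ P 0
  · have hl : l ∈ P 1 := (hu l).resolve_left (by tauto)
    exact cross_zero _ _ hd hu ψ _ _ hψ (hφ 1) hp k l hk hl
  · have hk1 : k ∈ P 1 := (hu k).resolve_left hk
    have hl : l ∈ P 0 := by tauto
    exact cross_zero _ _ hd.symm (fun q => (hu q).symm) ψ _ _
      (fun x => by rw [hψ, mul_comm]) (hφ 0) hp k l hk1 hl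

/-- In a bipartition the membership in the first block is not constant. -/
lemma partition_nonconst {n : ℕ} (P : Fin 2 → Finset (Fin n)) (hP : IsPartition P) :
    (∃ q, q ∈ P 0) ∧ ∃ q, q ∉ P 0 := by
  refine ⟨hP.1 0, ?_⟩
  obtain ⟨q, hq⟩ := hP.1 1
  exact ⟨q, fun h => Finset.disjoint_left.mp (hP.2.1 0 1 (by decide)) h hq⟩

lemma Mtot_three (ρ : Matrix (Fin 3 → Fin 2) (Fin 3 → Fin 2) ℂ) :
    Mtot ρ = Mkl ρ 0 1 + Mkl ρ 0 2 + Mkl ρ 1 2 := by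
  have : (Finset.univ.filter (fun p : Fin 3 × Fin 3 => p.1 < p.2))
      = {(0, 1), (0, 2), (1, 2)} := by decide
  unfold Mtot
  rw [this]
  simp [add_assoc]

lemma Mtot_four (ρ : Matrix (Fin 4 → Fin 2) (Fin 4 → Fin 2) ℂ) :
    Mtot ρ = Mkl ρ 0 1 + Mkl ρ 0 2 + Mkl ρ 0 3 + Mkl ρ 1 2 + Mkl ρ 1 3 + Mkl ρ 2 3 := by
  have : (Finset.univ.filter (fun p : Fin 4 × Fin 4 => p.1 < p.2))
      = {(0, 1), (0, 2), (0, 3), (1, 2), (1, 3), (2, 3)} := by decide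
  unfold Mtot
  rw [this]
  simp [add_assoc]

/-- Proposition 5, small cases: for a preferred-basis pure
3-qubit state, `M > 2` implies genuine 3-partite entanglement; for a
preferred-basis pure 4-qubit state, `M > 4` implies genuine 4-partite
entanglement (no bipartition product in either case). -/
theorem genuinely_entangled_small_cases :
    (∀ ψ : (Fin 3 → Fin 2) → ℂ, UnitVec ψ → PreferredBasis (pureDensity ψ) →
      Mtot (pureDensity ψ) > 2 →
      ¬ ∃ P : Fin 2 → Finset (Fin 3), IsPartition P ∧ IsProductOver ψ P) ∧
    (∀ ψ : (Fin 4 → Fin 2) → ℂ, UnitVec ψ → PreferredBasis (pureDensity ψ) →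
      Mtot (pureDensity ψ) > 4 →
      ¬ ∃ P : Fin 2 → Finset (Fin 4), IsPartition P ∧ IsProductOver ψ P) := by
  constructor
  · rintro ψ hψ hp hM ⟨P, hP, hprod⟩
    have hz := product_cross ψ hp P hP hprod
    have hmono := monogamy ψ hψ
    have hnn := Mkl_nonneg (pureDensity ψ)
    obtain ⟨hex, hnex⟩ := partition_nonconst P hP
    rw [Mtot_three] at hM
    simp only [Fin.exists_fin_succ, Fin.exists_fin_zero, or_false] at hex hnex
    have s01 := Mkl_symm (pureDensity ψ) 0 1 (by decide)
    have s02 := Mkl_symm (pureDensity ψ) 0 2 (by decide)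
    have s12 := Mkl_symm (pureDensity ψ) 1 2 (by decide)
    have m0 := hmono 0 1 2 (by decide) (by decide) (by decide)
    have m1 := hmono 1 0 2 (by decide) (by decide) (by decide)
    have m2 := hmono 2 0 1 (by decide) (by decide) (by decide)
    have z01 := hz 0 1
    have z02 := hz 0 2
    have z12 := hz 1 2
    have n01 := hnn 0 1
    have n02 := hnn 0 2
    have n12 := hnn 1 2
    by_cases h0 : (0 : Fin 3) ∈ P 0 <;> by_cases h1 : (1 : Fin 3) ∈ P 0 <;>
      by_cases h2 : (2 : Fin 3) ∈ P 0 <;> simp [h0, h1, h2] at hex hnex z01 z02 z12 <;> linarith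
  · rintro ψ hψ hp hM ⟨P, hP, hprod⟩
    have hz := product_cross ψ hp P hP hprod
    have hmono := monogamy ψ hψ
    have hnn := Mkl_nonneg (pureDensity ψ)
    obtain ⟨hex, hnex⟩ := partition_nonconst P hP
    rw [Mtot_four] at hM
    simp only [Fin.exists_fin_succ, Fin.exists_fin_zero, or_false] at hex hnex
    have s01 := Mkl_symm (pureDensity ψ) 0 1 (by decide)
    have s02 := Mkl_symm (pureDensity ψ) 0 2 (by decide)
    have s03 := Mkl_symm (pureDensity ψ) 0 3 (by decide)
    have s12 := Mkl_symm (pureDensity ψ) 1 2 (by decide)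
    have s13 := Mkl_symm (pureDensity ψ) 1 3 (by decide)
    have s23 := Mkl_symm (pureDensity ψ) 2 3 (by decide)
    have m012 := hmono 0 1 2 (by decide) (by decide) (by decide)
    have m013 := hmono 0 1 3 (by decide) (by decide) (by decide)
    have m023 := hmono 0 2 3 (by decide) (by decide) (by decide)
    have m102 := hmono 1 0 2 (by decide) (by decide) (by decide)
    have m103 := hmono 1 0 3 (by decide) (by decide) (by decide)
    have m123 := hmono 1 2 3 (by decide) (by decide) (by decide)
    have m201 := hmono 2 0 1 (by decide) (by decide) (by decide)
    have m203 := hmono 2 0 3 (by decide) (by decide) (by decide)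
    have m213 := hmono 2 1 3 (by decide) (by decide) (by decide)
    have m301 := hmono 3 0 1 (by decide) (by decide) (by decide)
    have m302 := hmono 3 0 2 (by decide) (by decide) (by decide)
    have m312 := hmono 3 1 2 (by decide) (by decide) (by decide)
    have z01 := hz 0 1
    have z02 := hz 0 2
    have z03 := hz 0 3
    have z12 := hz 1 2
    have z13 := hz 1 3
    have z23 := hz 2 3
    by_cases h0 : (0 : Fin 4) ∈ P 0 <;> by_cases h1 : (1 : Fin 4) ∈ P 0 <;>
      by_cases h2 : (2 : Fin 4) ∈ P 0 <;> by_cases h3 : (3 : Fin 4) ∈ P 0 <;>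
      simp [h0, h1, h2, h3] at hex hnex z01 z02 z03 z12 z13 z23 <;>
      linarith [hnn 0 1, hnn 0 2, hnn 0 3, hnn 1 2, hnn 1 3, hnn 2 3]
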